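/- For every k ≥ 0, every graph G ∈ D̂_k has at least k+2 vertices of degree exactly k+1. -/

import Mathlib

open SimpleGraph

/-- The degree of a vertex in a finite simple graph. -/
noncomputable def degC {V : Type} [Fintype V] (G : SimpleGraph V) (v : V) : ℕ := by
  classical exact G.degree v

/-- The minimum degree of a finite simple graph. -/
noncomputable def minDegC {V : Type} [Fintype V] (G : SimpleGraph V) : ℕ := by
  classical exact G.minDegree

/-- `H` is a minor of `G`: there is a family of nonempty, pairwise disjoint,
connected branch sets, one for each vertex of `H`, such that every edge of `H`
is realised by an edge of `G` between the corresponding branch sets. -/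
def IsMinorOf {W V : Type} (H : SimpleGraph W) (G : SimpleGraph V) : Prop :=
  ∃ B : W → Set V,
    (∀ w, (B w).Nonempty) ∧
    (∀ u w : W, u ≠ w → Disjoint (B u) (B w)) ∧
    (∀ w, (G.induce (B w)).Connected) ∧
    (∀ ⦃u w : W⦄, H.Adj u w → ∃ a ∈ B u, ∃ b ∈ B w, G.Adj a b)

/-- `H` is a proper minor of `G`: a minor that is not isomorphic to `G`. -/
def IsProperMinorOf {W V : Type} (H : SimpleGraph W) (G : SimpleGraph V) : Prop :=
  IsMinorOf H G ∧ ¬ Nonempty (H ≃g G)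

/-- `G ∈ D_k`: every minor of `G` has minimum degree at most `k`. -/
def MemD (k : ℕ) {V : Type} (G : SimpleGraph V) : Prop :=
  ∀ (W : Type) [Fintype W] (H : SimpleGraph W), IsMinorOf H G → minDegC H ≤ k

/-- `G ∈ D̂_k`: `G ∉ D_k` but every proper minor of `G` is in `D_k`. -/
def MemDHat (k : ℕ) {V : Type} (G : SimpleGraph V) : Prop :=
  ¬ MemD k G ∧ ∀ (W : Type) [Fintype W] (H : SimpleGraph W), IsProperMinorOf H G → MemD k H

/-!
Only deletions of single edges matter. If deleting an edge `e` always destroys the property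
`k < minDegree`, then some vertex has degree at most `k` after the deletion; it must lie on `e`,
and it had degree exactly `k + 1` before. So the vertices of degree greater than `k + 1` are
independent: if there is one, its `k + 2` or more neighbors all have degree `k + 1`; otherwise all
vertices have degree `k + 1`, and a vertex together with its neighbors accounts for `k + 2` of them.
-/

section DeleteEdges

variable {V : Type*} {G : SimpleGraph V}

lemma deleteEdges_lt_of_mem_edgeSet {e : Sym2 V} (he : e ∈ G.edgeSet) : G.deleteEdges {e} < G :=
  (G.deleteEdges_le {e}).lt_of_ne fun h ↦
    Set.disjoint_singleton_right.mp (deleteEdges_eq_self.mp h) he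

lemma incidenceSet_deleteEdges (s : Set (Sym2 V)) (v : V) :
    (G.deleteEdges s).incidenceSet v = G.incidenceSet v \ s := by
  ext e
  simp only [incidenceSet, edgeSet_deleteEdges, Set.mem_sdiff, Set.mem_ofPred_eq]
  tauto

variable {e : Sym2 V} {v : V} [Fintype (G.neighborSet v)]
  [Fintype ((G.deleteEdges {e}).neighborSet v)]

lemma incidenceFinset_deleteEdges_singleton [DecidableEq V] :
    (G.deleteEdges {e}).incidenceFinset v = (G.incidenceFinset v).erase e := by
  apply Finset.coe_injective
  simp [incidenceSet_deleteEdges]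

lemma degree_deleteEdges_of_notMem (hv : v ∉ e) : (G.deleteEdges {e}).degree v = G.degree v := by
  classical
  have he : e ∉ G.incidenceFinset v := fun h ↦ hv ((G.mem_incidenceFinset v e).mp h).2
  rw [← card_incidenceFinset_eq_degree, incidenceFinset_deleteEdges_singleton,
    Finset.erase_eq_of_notMem he, card_incidenceFinset_eq_degree]

lemma degree_le_degree_deleteEdges_add_one : G.degree v ≤ (G.deleteEdges {e}).degree v + 1 := by
  classical
  simp_rw [← card_incidenceFinset_eq_degree, incidenceFinset_deleteEdges_singleton]
  exact tsub_le_iff_right.mp Finset.pred_card_le_card_erase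

end DeleteEdges

section MinDegree

variable {V : Type*} [Fintype V] {G : SimpleGraph V} {k : ℕ}

open Classical in
lemma exists_mem_degree_eq_add_one_of_minimal
    (hG : Minimal (fun H : SimpleGraph V ↦ k < H.minDegree) G)
    {e : Sym2 V} (he : e ∈ G.edgeSet) : ∃ v ∈ e, G.degree v = k + 1 := by
  have : Nonempty V := ⟨e.out.1⟩
  obtain ⟨v, hv⟩ := (G.deleteEdges {e}).exists_minimal_degree_vertex
  have hv_low : (G.deleteEdges {e}).degree v ≤ k := by
    rw [← hv]
    convert Nat.not_lt.mp (hG.not_prop_of_lt (deleteEdges_lt_of_mem_edgeSet he))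
  have hv_gt : k < G.degree v := hG.prop.trans_le (G.minDegree_le_degree v)
  refine ⟨v, ?_, le_antisymm ?_ hv_gt⟩
  · by_contra hve
    exact (hv_low.trans_lt hv_gt).ne (degree_deleteEdges_of_notMem hve)
  · exact degree_le_degree_deleteEdges_add_one.trans (Nat.succ_le_succ hv_low)

open Classical in
theorem memDHat_many_low_degree_vertices_general
    (hG : Minimal (fun H : SimpleGraph V ↦ k < H.minDegree) G) :
    k + 2 ≤ {v : V | G.degree v = k + 1}.ncard := by
  by_cases hreg : ∀ v, G.degree v = k + 1
  · have : Nonempty V := by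
      by_contra! hV
      exact absurd hG.prop (by simp)
    calc k + 2 ≤ G.minDegree + 1 := Nat.succ_le_succ hG.prop
      _ ≤ Fintype.card V := G.minDegree_lt_card
      _ = {v : V | G.degree v = k + 1}.ncard := by simp [hreg, Set.ncard_univ]
  · obtain ⟨v, hv⟩ := not_forall.mp hreg
    have hv_gt : k + 1 < G.degree v :=
      lt_of_le_of_ne (hG.prop.trans_le (G.minDegree_le_degree v)) (Ne.symm hv)
    have hnbr : G.neighborSet v ⊆ {w | G.degree w = k + 1} := fun w hvw ↦ by
      obtain ⟨x, hx, hdeg⟩ := exists_mem_degree_eq_add_one_of_minimal hG (G.mem_edgeSet.mpr hvw)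
      obtain rfl | rfl := Sym2.mem_iff.mp hx
      exacts [absurd hdeg hv, hdeg]
    calc k + 2 ≤ G.degree v := hv_gt
      _ = (G.neighborSet v).ncard := by
        rw [Set.ncard_eq_toFinset_card', Set.toFinset_card, card_neighborSet_eq_degree]
      _ ≤ {w | G.degree w = k + 1}.ncard := Set.ncard_le_ncard hnbr

end MinDegree

lemma not_nonempty_iso_of_lt {V : Type*} [Finite V] {G H : SimpleGraph V} (h : H < G) :
    ¬ Nonempty (H ≃g G) := by
  classical
  have := Fintype.ofFinite V
  rintro ⟨e⟩
  exact (Finset.card_lt_card (edgeFinset_strict_mono h)).ne e.card_edgeFinset_eq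

lemma IsMinorOf.of_isContained {V W : Type} {H : SimpleGraph W} {G : SimpleGraph V} (h : H ⊑ G) :
    IsMinorOf H G := by
  obtain ⟨f⟩ := h
  refine ⟨fun w ↦ {f w}, fun w ↦ Set.singleton_nonempty _, fun u w huw ↦ ?_, fun w ↦ ?_,
    fun u w huw ↦ ⟨f u, rfl, f w, rfl, f.toHom.map_adj huw⟩⟩
  · simpa using f.injective.ne huw
  · exact ⟨Preconnected.of_subsingleton⟩

section MemDHat

variable {V : Type} [Fintype V] {G : SimpleGraph V} {k : ℕ}

lemma degC_eq_degree (v : V) [Fintype (G.neighborSet v)] : degC G v = G.degree v := by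
  unfold degC
  convert rfl

lemma minDegC_eq_minDegree [DecidableRel G.Adj] : minDegC G = G.minDegree := by
  unfold minDegC
  convert rfl

lemma MemD.minDegC_le (hG : MemD k G) : minDegC G ≤ k :=
  hG V G (.of_isContained .rfl)

lemma MemDHat.lt_minDegC (hG : MemDHat k G) : k < minDegC G := by
  classical
  obtain ⟨hnot, hproper⟩ := hG
  contrapose! hnot
  intro W _ H hH
  by_cases hiso : Nonempty (H ≃g G)
  · rw [minDegC_eq_minDegree] at hnot ⊢
    exact hiso.some.minDegree_eq.trans_le hnot
  · exact (hproper W H ⟨hH, hiso⟩).minDegC_le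

open Classical in
lemma MemDHat.minimal_lt_minDegree (hG : MemDHat k G) :
    Minimal (fun H : SimpleGraph V ↦ k < H.minDegree) G := by
  refine minimal_iff_forall_lt.mpr ⟨?_, fun H hlt ↦ not_lt.mpr ?_⟩
  · rw [← minDegC_eq_minDegree]
    exact hG.lt_minDegC
  · have hH : MemD k H :=
      hG.2 V H ⟨.of_isContained (.of_le hlt.le), not_nonempty_iso_of_lt hlt⟩
    rw [← minDegC_eq_minDegree]
    exact hH.minDegC_le

end MemDHat

/-- Proposition 4.1: every graph in `D̂_k` has at least `k+2` vertices of
degree exactly `k+1`. -/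
theorem memDHat_many_low_degree_vertices (k : ℕ) {V : Type} [Fintype V]
    (G : SimpleGraph V) (hG : MemDHat k G) :
    k + 2 ≤ {v : V | degC G v = k + 1}.ncard := by
  classical
  simpa only [degC_eq_degree] using
    memDHat_many_low_degree_vertices_general hG.minimal_lt_minDegree
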